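/- Let r_n denote the number of permutations of [n] having no up-down cycles. Then for every m ≥ 1, r_{2m-1}/(2m−1)! = r_{2m}/(2m)! = 1/3! − 1/5! + 1/7! − ⋯ + (−1)^m/(2m−1)! (the sum Σ_{i=2}^{m} (−1)^i/(2i−1)!, which is empty, hence 0, for m = 1). -/

import Mathlib

open Equiv Finset

/-- `π` is an up-down permutation of `[n]` in one-line notation (0-indexed):
`π 0 < π 1 > π 2 < π 3 > ⋯`. -/
def IsUpDownPerm {n : ℕ} (π : Equiv.Perm (Fin n)) : Prop :=
  ∀ i j : Fin n, (j : ℕ) = (i : ℕ) + 1 →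
    (((i : ℕ) % 2 = 0 → π i < π j) ∧ ((i : ℕ) % 2 = 1 → π j < π i))

/-- The Euler number `E n`: the number of up-down permutations of `[n]`. -/
noncomputable def eulerE (n : ℕ) : ℕ :=
  Nat.card {π : Equiv.Perm (Fin n) // IsUpDownPerm π}

/-- The length of the cycle of `π` containing `x` (fixed points give length `1`). -/
noncomputable def cycLen {n : ℕ} (π : Equiv.Perm (Fin n)) (x : Fin n) : ℕ :=
  Function.minimalPeriod (⇑π) x

/-- `x` is the smallest element of its cycle of `π`. -/
def IsOrbitMin {n : ℕ} (π : Equiv.Perm (Fin n)) (x : Fin n) : Prop :=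
  ∀ k : ℕ, x ≤ (π ^ k) x

/-- The cyclic representation `x, π x, π² x, …` (of length `cycLen π x`) of the
cycle of `π` containing `x` has the up-down pattern `x < π x > π² x < ⋯`. -/
def CycleUpDownAt {n : ℕ} (π : Equiv.Perm (Fin n)) (x : Fin n) : Prop :=
  ∀ i : ℕ, i + 1 < cycLen π x →
    ((i % 2 = 0 → (π ^ i) x < (π ^ (i + 1)) x) ∧
     (i % 2 = 1 → (π ^ (i + 1)) x < (π ^ i) x))

/-- `π` is cycle-up-down: every cycle, written in standard form
(starting at its smallest element), is up-down. -/
def IsCUD {n : ℕ} (π : Equiv.Perm (Fin n)) : Prop :=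
  ∀ x : Fin n, IsOrbitMin π x → CycleUpDownAt π x

/-- The number of cycles of `π` (fixed points included), counted via the
smallest elements of the cycles. -/
noncomputable def cycleCount {n : ℕ} (π : Equiv.Perm (Fin n)) : ℕ :=
  Nat.card {x : Fin n // IsOrbitMin π x}

/-- The number of cycles of `π` of even length. -/
noncomputable def evenCycleCount {n : ℕ} (π : Equiv.Perm (Fin n)) : ℕ :=
  Nat.card {x : Fin n // IsOrbitMin π x ∧ Even (cycLen π x)}

/-- The number of cycles of `π` of odd length. -/
noncomputable def oddCycleCount {n : ℕ} (π : Equiv.Perm (Fin n)) : ℕ :=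
  Nat.card {x : Fin n // IsOrbitMin π x ∧ Odd (cycLen π x)}

/-- The number of excedances of `π`. -/
noncomputable def excCount {n : ℕ} (π : Equiv.Perm (Fin n)) : ℕ :=
  Nat.card {i : Fin n // i < π i}

/-- The number of left-to-right minima of `π` (in one-line notation). -/
noncomputable def lrmCount {n : ℕ} (π : Equiv.Perm (Fin n)) : ℕ :=
  Nat.card {i : Fin n // ∀ j : Fin n, j < i → π i < π j}

/-- The number of extreme elements of `π`: entries in position `≥ 2`
(0-indexed: position `≥ 1`) that are left-to-right minima or maxima. -/
noncomputable def extrCount {n : ℕ} (π : Equiv.Perm (Fin n)) : ℕ :=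
  Nat.card {i : Fin n // (i : ℕ) ≠ 0 ∧
    ((∀ j : Fin n, j < i → π i < π j) ∨ (∀ j : Fin n, j < i → π j < π i))}

/-- Auxiliary (fuel-based) computation of the length of the `s`-driven
min/max subsequence of a list: at step `j` (0-indexed) pick the minimum of the
remaining list if `s j = true`, its maximum if `s j = false`, and continue with
the part of the list strictly to the right of the picked entry. -/
def msLenAux : ℕ → (ℕ → Bool) → List ℕ → ℕ
  | 0, _, _ => 0
  | _, _, [] => 0
  | fuel + 1, s, a :: t =>
      let l := a :: t
      let v := if s 0 then l.foldr min a else l.foldr max a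
      1 + msLenAux fuel (fun i => s (i + 1)) ((l.dropWhile (· != v)).tail)

/-- The length of the `s`-driven min/max subsequence of a list
(`s j = true` means minimum at step `j`, `s j = false` means maximum). -/
def msLen (s : ℕ → Bool) (l : List ℕ) : ℕ := msLenAux l.length s l

/-- The one-line notation of `π` as a list of natural numbers. -/
def oneLine {n : ℕ} (π : Equiv.Perm (Fin n)) : List ℕ :=
  List.ofFn fun i => ((π i : ℕ))

/-- The statistic `m_s(π)`: the length of the `s`-driven min/max subsequence
of the one-line notation of `π`. -/
def msStat {n : ℕ} (s : ℕ → Bool) (π : Equiv.Perm (Fin n)) : ℕ :=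
  msLen s (oneLine π)

/-- `st π`: the length of the min-max sequence of `π` (alternately take the
minimum, the maximum, the minimum, … of what remains to the right). -/
def stStat {n : ℕ} (π : Equiv.Perm (Fin n)) : ℕ :=
  msStat (fun i => i % 2 == 0) π

/-- `π` is a cyclic permutation: it consists of a single cycle. -/
def IsCyclicPerm {n : ℕ} (π : Equiv.Perm (Fin n)) : Prop :=
  ∀ x y : Fin n, π.SameCycle x y

/-- The number of up-down cycles of `π` having length `k`. -/
noncomputable def udLenCount {n : ℕ} (π : Equiv.Perm (Fin n)) (k : ℕ) : ℕ :=
  Nat.card {x : Fin n // IsOrbitMin π x ∧ cycLen π x = k ∧ CycleUpDownAt π x}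

/-- `ud π`: the number of up-down cycles of `π`. -/
noncomputable def udCount {n : ℕ} (π : Equiv.Perm (Fin n)) : ℕ :=
  Nat.card {x : Fin n // IsOrbitMin π x ∧ CycleUpDownAt π x}

/-- `r n`: the number of permutations of `[n]` having no up-down cycles. -/
noncomputable def noUDCyclesCount (n : ℕ) : ℕ :=
  Nat.card {π : Equiv.Perm (Fin n) // ∀ x : Fin n, IsOrbitMin π x → ¬ CycleUpDownAt π x}

/-!
Let `r n` be the number of permutations of `[n]` without up-down cycles, and for `a, b ≥ 0` let
`h a b` be the number of permutations of `[a + b + 1]` in which the cycle read from the element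
with `a` elements below it and `b` above it alternates, starting with a descent, while no other
cycle is up-down. Starting with an ascent instead gives `h b a`, because the two families of
numbers satisfy mirrored recurrences. Removing the element the cycle is read from therefore gives
`h 0 n = r n` and the relation `h (a + 1) b = h a (b + 1) + h b a` of the Seidel–Entringer triangle.
The permutations with no up-down cycle off a given element do not depend in number on that
element; removing it gives `r (n + 1) + h n 0 = (n + 1) * r n + n * h (n - 1) 0`.

Let `H` be the exponential generating function of `h`. The Entringer relation is
`∂H/∂x - ∂H/∂y = H(y, x)`. It is inherited by `(1 - x - y) H`, since `1 - x - y` is symmetric and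
is killed by `∂/∂x - ∂/∂y`, while the second recurrence becomes a boundary condition that
determines `(1 - x - y) H` completely. As `cos x - sin y` satisfies the same conditions,
`H = (cos x - sin y) / (1 - x - y)`, and setting `x = 0` yields
`∑ r n * y ^ n / n! = (1 - sin y) / (1 - y)`.
-/

lemma isPeriodicPt_iff_pow_apply_eq {α : Type*} {π : Perm α} {x : α} {k : ℕ} :
    Function.IsPeriodicPt π k x ↔ (π ^ k) x = x := by
  rw [Function.IsPeriodicPt, Function.IsFixedPt, Perm.iterate_eq_pow]

lemma pow_succ_apply {α : Type*} (π : Perm α) (k : ℕ) (x : α) :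
    (π ^ (k + 1)) x = π ((π ^ k) x) := by
  rw [pow_succ', Perm.mul_apply]

section Cycles

variable {m n : ℕ}

lemma pow_cycLen_apply (π : Perm (Fin n)) (x : Fin n) : (π ^ cycLen π x) x = x :=
  isPeriodicPt_iff_pow_apply_eq.1 (Function.isPeriodicPt_minimalPeriod π x)

lemma cycLen_le {π : Perm (Fin n)} {x : Fin n} {k : ℕ} (hk : 0 < k) (h : (π ^ k) x = x) :
    cycLen π x ≤ k :=
  (isPeriodicPt_iff_pow_apply_eq.2 h).minimalPeriod_le hk

lemma cycLen_pos (π : Perm (Fin n)) (x : Fin n) : 0 < cycLen π x :=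
  (isPeriodicPt_iff_pow_apply_eq.2 (by rw [pow_orderOf_eq_one, Perm.one_apply])).minimalPeriod_pos
    (orderOf_pos π)

lemma exists_lt_cycLen_pow_apply_eq {π : Perm (Fin n)} {x y : Fin n} (h : π.SameCycle x y) :
    ∃ k < cycLen π x, (π ^ k) x = y := by
  obtain ⟨k, rfl⟩ := h.exists_nat_pow_eq
  refine ⟨k % cycLen π x, Nat.mod_lt _ (cycLen_pos π x), ?_⟩
  simpa only [Perm.iterate_eq_pow, cycLen] using
    Function.iterate_mod_minimalPeriod_eq (f := π) (x := x) (n := k)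

section Transfer

variable {π : Perm (Fin n)} {τ : Perm (Fin m)} {f : Fin m ↪o Fin n} {y : Fin m}

lemma cycLen_eq_of_pow_apply_eq (h : ∀ k, (π ^ k) (f y) = f ((τ ^ k) y)) :
    cycLen π (f y) = cycLen τ y :=
  Function.minimalPeriod_eq_minimalPeriod_iff.2 fun k => by
    rw [isPeriodicPt_iff_pow_apply_eq, isPeriodicPt_iff_pow_apply_eq, h, f.injective.eq_iff]

lemma isOrbitMin_iff_of_pow_apply_eq (h : ∀ k, (π ^ k) (f y) = f ((τ ^ k) y)) :
    IsOrbitMin π (f y) ↔ IsOrbitMin τ y := by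
  simp only [IsOrbitMin, h, f.le_iff_le]

lemma cycleUpDownAt_iff_of_pow_apply_eq (h : ∀ k, (π ^ k) (f y) = f ((τ ^ k) y)) :
    CycleUpDownAt π (f y) ↔ CycleUpDownAt τ y := by
  simp only [CycleUpDownAt, cycLen_eq_of_pow_apply_eq h, h, f.lt_iff_lt]

end Transfer

/-- The step from `x` to `y` goes up if `up = true`, and down if `up = false`. -/
abbrev StepIn {α : Type*} [LT α] (up : Bool) (x y : α) : Prop :=
  if up then x < y else y < x

/-- The word `x, π x, π² x, …` of length `cycLen π x` alternates, its first step going up if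
`up = true` and down if `up = false`. Unlike in a standard form, `x` need not be the smallest
element of its cycle. -/
def CycleAlternatesAt (up : Bool) (π : Perm (Fin n)) (x : Fin n) : Prop :=
  ∀ i : ℕ, i + 1 < cycLen π x → StepIn (up ^^ i.bodd) ((π ^ i) x) ((π ^ (i + 1)) x)

lemma cycleAlternatesAt_true_iff {π : Perm (Fin n)} {x : Fin n} :
    CycleAlternatesAt true π x ↔ CycleUpDownAt π x := by
  refine forall₂_congr fun i _ => ?_
  cases hi : i.bodd <;> simp [Nat.mod_two_of_bodd, hi]

/-- `π` has no up-down cycle. -/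
def NoUpDownCycle (π : Perm (Fin n)) : Prop :=
  ∀ x, IsOrbitMin π x → ¬ CycleUpDownAt π x

/-- No cycle of `π` other than the one through `a` is up-down. -/
def NoUpDownCycleOff (π : Perm (Fin n)) (a : Fin n) : Prop :=
  ∀ x, ¬ π.SameCycle a x → IsOrbitMin π x → ¬ CycleUpDownAt π x

lemma noUpDownCycle_iff_zero {π : Perm (Fin (n + 1))} :
    NoUpDownCycle π ↔ ¬ CycleAlternatesAt true π 0 ∧ NoUpDownCycleOff π 0 := by
  rw [cycleAlternatesAt_true_iff]
  refine ⟨fun h => ⟨h 0 fun k => Fin.zero_le _, fun x _ => h x⟩, fun ⟨hzero, hoff⟩ x hx => ?_⟩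
  by_cases hcycle : π.SameCycle 0 x
  · obtain ⟨k, hk⟩ := hcycle.symm.exists_nat_pow_eq
    have x_eq_zero : x = 0 := Fin.le_zero_iff.1 (hk ▸ hx k)
    rwa [x_eq_zero]
  · exact hoff x hcycle hx

end Cycles

section InsertPoint

variable {n : ℕ} (a : Fin (n + 1)) (c : Fin n) (τ : Perm (Fin n))

/-- Every permutation of `Fin (n + 1)` arises in exactly one way from a permutation `τ` of
`Fin n`, transported along `a.succAbove`, by making `a` a fixed point (`none`) or by inserting `a`
into a cycle right before `a.succAbove c` (`some c`). -/
def insertPointEquiv : Option (Fin n) × Perm (Fin n) ≃ Perm (Fin (n + 1)) :=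
  ((finSuccEquiv' a).permCongr.trans Perm.decomposeOption).symm

/-- The permutation of `Fin (n + 1)` obtained from `τ` by adding `a` as a fixed point. -/
def insertFixed : Perm (Fin (n + 1)) := insertPointEquiv a (none, τ)

/-- The permutation of `Fin (n + 1)` obtained from `τ` by inserting `a` right before
`a.succAbove c`. -/
def insertBefore : Perm (Fin (n + 1)) := insertPointEquiv a (some c, τ)

lemma card_perm_eq_add_sum_insert (P : Perm (Fin (n + 1)) → Prop) :
    Nat.card {π // P π} = Nat.card {τ // P (insertFixed a τ)} +
      ∑ c, Nat.card {τ // P (insertBefore a c τ)} := by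
  have e : {π // P π} ≃ Σ o, {τ // P (insertPointEquiv a (o, τ))} :=
    ((insertPointEquiv a).subtypeEquivOfSubtype (p := P)).symm.trans
      (Equiv.subtypeProdEquivSigmaSubtype fun o τ => P (insertPointEquiv a (o, τ)))
  rw [Nat.card_congr e, Nat.card_sigma, Fintype.sum_option]
  rfl

lemma insertFixed_self : insertFixed a τ a = a := by
  simp [insertFixed, insertPointEquiv]

lemma insertFixed_succAbove (y : Fin n) :
    insertFixed a τ (a.succAbove y) = a.succAbove (τ y) := by
  simp [insertFixed, insertPointEquiv]

lemma insertBefore_self : insertBefore a c τ a = a.succAbove c := by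
  simp [insertBefore, insertPointEquiv]

variable {c τ}

lemma insertBefore_succAbove_of_eq {y : Fin n} (h : τ y = c) :
    insertBefore a c τ (a.succAbove y) = a := by
  simp [insertBefore, insertPointEquiv, h]

lemma insertBefore_succAbove_of_ne {y : Fin n} (h : τ y ≠ c) :
    insertBefore a c τ (a.succAbove y) = a.succAbove (τ y) := by
  simp [insertBefore, insertPointEquiv, swap_apply_of_ne_of_ne, h]

variable {a}

lemma not_sameCycle_of_pow_succAbove {π : Perm (Fin (n + 1))} {y : Fin n}
    (h : ∀ k, (π ^ k) (a.succAbove y) = a.succAbove ((τ ^ k) y)) :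
    ¬ π.SameCycle a (a.succAbove y) := fun hcycle => by
  obtain ⟨k, hk⟩ := hcycle.symm.exists_nat_pow_eq
  exact a.succAbove_ne _ ((h k).symm.trans hk)

variable (a)

lemma insertFixed_pow_succAbove (y : Fin n) (k : ℕ) :
    (insertFixed a τ ^ k) (a.succAbove y) = a.succAbove ((τ ^ k) y) := by
  induction k with
  | zero => rfl
  | succ k ih => rw [pow_succ_apply, ih, insertFixed_succAbove, pow_succ_apply]

lemma noUpDownCycleOff_insertFixed_iff :
    NoUpDownCycleOff (insertFixed a τ) a ↔ NoUpDownCycle τ := by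
  rw [NoUpDownCycleOff, Fin.forall_iff_succAbove a, NoUpDownCycle]
  simp only [Perm.SameCycle.refl, not_true_eq_false, false_implies, true_and]
  refine forall_congr' fun y => ?_
  have hpow := insertFixed_pow_succAbove a (τ := τ) y
  rw [imp_iff_right (not_sameCycle_of_pow_succAbove hpow)]
  exact imp_congr (isOrbitMin_iff_of_pow_apply_eq (f := a.succAboveOrderEmb) hpow)
    (cycleUpDownAt_iff_of_pow_apply_eq (f := a.succAboveOrderEmb) hpow).not

lemma cycleAlternatesAt_insertFixed (up : Bool) : CycleAlternatesAt up (insertFixed a τ) a := by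
  have cycLen_le_one : cycLen (insertFixed a τ) a ≤ 1 :=
    cycLen_le one_pos (by rw [pow_one, insertFixed_self])
  intro i hi
  omega

lemma insertBefore_pow_succ_self {i : ℕ} (hi : i < cycLen τ c) :
    (insertBefore a c τ ^ (i + 1)) a = a.succAbove ((τ ^ i) c) := by
  induction i with
  | zero => simpa using insertBefore_self a c τ
  | succ i ih =>
    have not_closed : τ ((τ ^ i) c) ≠ c := fun h =>
      hi.not_ge (cycLen_le i.succ_pos ((pow_succ_apply τ i c).trans h))
    rw [pow_succ_apply, ih (by omega), insertBefore_succAbove_of_ne a not_closed, pow_succ_apply]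

lemma cycLen_insertBefore_self : cycLen (insertBefore a c τ) a = cycLen τ c + 1 := by
  apply le_antisymm
  · obtain ⟨l, hl⟩ := Nat.exists_eq_add_one.2 (cycLen_pos τ c)
    have closed : τ ((τ ^ l) c) = c := by rw [← pow_succ_apply, ← hl, pow_cycLen_apply]
    refine cycLen_le (Nat.succ_pos _) ?_
    rw [pow_succ_apply, hl, insertBefore_pow_succ_self a (by omega),
      insertBefore_succAbove_of_eq a closed]
  · by_contra! hlt
    obtain ⟨l, hl⟩ := Nat.exists_eq_add_one.2 (cycLen_pos (insertBefore a c τ) a)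
    have hclosed := pow_cycLen_apply (insertBefore a c τ) a
    rw [hl, insertBefore_pow_succ_self a (by omega)] at hclosed
    exact a.succAbove_ne _ hclosed

lemma cycleAlternatesAt_insertBefore_iff {up : Bool} :
    CycleAlternatesAt up (insertBefore a c τ) a ↔
      StepIn up a (a.succAbove c) ∧ CycleAlternatesAt (!up) τ c := by
  have hlen := cycLen_insertBefore_self a (c := c) (τ := τ)
  have first_step : 0 + 1 < cycLen (insertBefore a c τ) a := by
    have := cycLen_pos τ c
    omega
  rw [CycleAlternatesAt, ← Nat.and_forall_add_one, imp_iff_right first_step]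
  refine and_congr ?_ (forall_congr' fun i => imp_congr_ctx (by omega) fun hi => ?_)
  · simp [insertBefore_self]
  · rw [insertBefore_pow_succ_self a hi, insertBefore_pow_succ_self a (by omega), Nat.bodd_succ,
      StepIn, Fin.succAbove_lt_succAbove_iff, Fin.succAbove_lt_succAbove_iff, Bool.xor_not,
      Bool.not_xor]

lemma insertBefore_pow_succAbove {y : Fin n} (hy : ¬ τ.SameCycle c y) (k : ℕ) :
    (insertBefore a c τ ^ k) (a.succAbove y) = a.succAbove ((τ ^ k) y) := by
  induction k with
  | zero => rfl
  | succ k ih =>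
    have avoids : τ ((τ ^ k) y) ≠ c := fun h =>
      hy (Perm.SameCycle.symm ⟨k + 1, by rw [← h, ← pow_succ_apply]; rfl⟩)
    rw [pow_succ_apply, ih, insertBefore_succAbove_of_ne a avoids, pow_succ_apply]

lemma sameCycle_insertBefore_iff {y : Fin n} :
    (insertBefore a c τ).SameCycle a (a.succAbove y) ↔ τ.SameCycle c y := by
  refine ⟨fun h => ?_, fun h => ?_⟩
  · by_contra hy
    exact not_sameCycle_of_pow_succAbove (insertBefore_pow_succAbove a hy) h
  · obtain ⟨k, hk, rfl⟩ := exists_lt_cycLen_pow_apply_eq h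
    exact ⟨(k + 1 : ℕ), insertBefore_pow_succ_self a hk⟩

lemma noUpDownCycleOff_insertBefore_iff :
    NoUpDownCycleOff (insertBefore a c τ) a ↔ NoUpDownCycleOff τ c := by
  rw [NoUpDownCycleOff, Fin.forall_iff_succAbove a, NoUpDownCycleOff]
  simp only [Perm.SameCycle.refl, not_true_eq_false, false_implies, true_and]
  refine forall_congr' fun y => imp_congr_ctx (sameCycle_insertBefore_iff a).not fun hy => ?_
  have hpow := insertBefore_pow_succAbove a hy
  exact imp_congr (isOrbitMin_iff_of_pow_apply_eq (f := a.succAboveOrderEmb) hpow)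
    (cycleUpDownAt_iff_of_pow_apply_eq (f := a.succAboveOrderEmb) hpow).not

end InsertPoint

lemma card_subtype_and_add_card_subtype_not_and {α : Type*} [Finite α] (p q : α → Prop) :
    Nat.card {x // p x ∧ q x} + Nat.card {x // ¬ p x ∧ q x} = Nat.card {x // q x} := by
  classical
  have := Fintype.ofFinite α
  simp only [Nat.card_eq_fintype_card, Fintype.card_subtype, and_comm (b := q _)]
  rw [← Finset.filter_filter, ← Finset.filter_filter, Finset.card_filter_add_card_filter_not]

section Counting

variable {n : ℕ}

/-- The number of permutations without up-down cycles other than possibly the one through `a`. -/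
noncomputable def noUDOffCount (a : Fin n) : ℕ :=
  Nat.card {π : Perm (Fin n) // NoUpDownCycleOff π a}

/-- The number of permutations whose cycle read from `a` alternates, with first step going in the
direction `up`, and which have no further up-down cycle. -/
noncomputable def altCycleCount (up : Bool) (a : Fin n) : ℕ :=
  Nat.card {π : Perm (Fin n) // CycleAlternatesAt up π a ∧ NoUpDownCycleOff π a}

lemma noUDCyclesCount_zero : noUDCyclesCount 0 = 1 := by
  have : Nonempty {π : Perm (Fin 0) // NoUpDownCycle π} := ⟨1, fun x => x.elim0⟩
  exact Nat.card_unique (α := {π : Perm (Fin 0) // NoUpDownCycle π})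

lemma noUDCyclesCount_succ_add_altCycleCount (n : ℕ) :
    noUDCyclesCount (n + 1) + altCycleCount true (0 : Fin (n + 1)) =
      noUDOffCount (0 : Fin (n + 1)) := by
  have h := card_subtype_and_add_card_subtype_not_and
    (fun π : Perm (Fin (n + 1)) => CycleAlternatesAt true π 0) (NoUpDownCycleOff · 0)
  simp only [← noUpDownCycle_iff_zero] at h
  rw [add_comm]
  exact h

lemma noUDOffCount_succ (a : Fin (n + 1)) :
    noUDOffCount a = noUDCyclesCount n + ∑ c : Fin n, noUDOffCount c := by
  rw [noUDOffCount, card_perm_eq_add_sum_insert a]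
  simp only [noUpDownCycleOff_insertFixed_iff, noUpDownCycleOff_insertBefore_iff]
  rfl

lemma noUDOffCount_eq (a b : Fin n) : noUDOffCount a = noUDOffCount b := by
  cases n with
  | zero => exact a.elim0
  | succ n => rw [noUDOffCount_succ, noUDOffCount_succ]

lemma altCycleCount_succ (up : Bool) (a : Fin (n + 1)) :
    altCycleCount up a =
      noUDCyclesCount n + ∑ c with StepIn up a (a.succAbove c), altCycleCount (!up) c := by
  rw [altCycleCount, card_perm_eq_add_sum_insert a, Finset.sum_filter]
  simp only [noUpDownCycleOff_insertFixed_iff, noUpDownCycleOff_insertBefore_iff,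
    cycleAlternatesAt_insertFixed, cycleAlternatesAt_insertBefore_iff, true_and, and_assoc]
  refine congrArg (noUDCyclesCount n + ·) (Finset.sum_congr rfl fun c _ => ?_)
  split_ifs with hstep <;> simp [hstep, altCycleCount]

lemma altCycleCount_true_succ (a : Fin (n + 1)) :
    altCycleCount true a =
      noUDCyclesCount n + ∑ c with a ≤ Fin.castSucc c, altCycleCount false c := by
  simp [altCycleCount_succ, StepIn, Fin.lt_succAbove_iff_le_castSucc]

lemma altCycleCount_false_succ (a : Fin (n + 1)) :
    altCycleCount false a =
      noUDCyclesCount n + ∑ c with Fin.castSucc c < a, altCycleCount true c := by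
  simp [altCycleCount_succ, StepIn, Fin.succAbove_lt_iff_castSucc_lt]

lemma altCycleCount_true_eq_rev (a : Fin n) : altCycleCount true a = altCycleCount false a.rev := by
  induction n with
  | zero => exact a.elim0
  | succ n ih =>
    rw [altCycleCount_true_succ, altCycleCount_false_succ]
    simp only [ih, Finset.sum_filter]
    congr 1
    refine Fintype.sum_equiv Fin.revPerm _ _ fun c => ?_
    have : Fin.castSucc c.rev < a.rev ↔ a ≤ c.castSucc := by
      rw [← Fin.rev_succ, Fin.rev_lt_rev, Fin.le_castSucc_iff]
    simp [this]

lemma altCycleCount_false_zero : altCycleCount false (0 : Fin (n + 1)) = noUDCyclesCount n := by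
  simp [altCycleCount_false_succ]

lemma altCycleCount_false_succ_eq_castSucc_add (i : Fin n) :
    altCycleCount false i.succ = altCycleCount false i.castSucc + altCycleCount false i.rev := by
  simp only [altCycleCount_false_succ, Fin.castSucc_lt_succ_iff, Fin.castSucc_lt_castSucc_iff,
    Finset.filter_ge_eq_Iic, Finset.filter_gt_eq_Iio, ← Finset.Iio_insert]
  rw [Finset.sum_insert (by simp), altCycleCount_true_eq_rev i]
  ring

end Counting

section EntringerArray

variable {R : Type*} [CommRing R]

/-- The recurrence of the Seidel–Entringer triangle `E`, for the array `f a b = E (a + b) a`. -/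
def IsEntringerArray (f : ℕ → ℕ → R) : Prop :=
  ∀ a b, f (a + 1) b = f a (b + 1) + f b a

/-- The coefficients of `(1 - x - y) * ∑ f a b * x ^ a / a! * y ^ b / b!`, as an exponential
generating function. Where a subtraction is truncated, its factor `a` or `b` is zero. -/
def mulOneSubXSubY (f : ℕ → ℕ → R) (a b : ℕ) : R :=
  f a b - a * f (a - 1) b - b * f a (b - 1)

lemma IsEntringerArray.mulOneSubXSubY {f : ℕ → ℕ → R} (hf : IsEntringerArray f) :
    IsEntringerArray (mulOneSubXSubY f) := by
  intro a b
  have left : (a : R) * f a b = a * (f (a - 1) (b + 1) + f b (a - 1)) := by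
    rcases a with _ | a
    · simp
    · rw [hf, Nat.add_sub_cancel]
  have right : (b : R) * f (a + 1) (b - 1) = b * (f a b + f (b - 1) a) := by
    rcases b with _ | b
    · simp
    · rw [hf, Nat.add_sub_cancel]
  simp only [_root_.mulOneSubXSubY, Nat.add_sub_cancel, Nat.cast_add, Nat.cast_one]
  linear_combination hf a b - left - right

lemma IsEntringerArray.eq_of_boundary {f g : ℕ → ℕ → R}
    (hf : IsEntringerArray f) (hg : IsEntringerArray g)
    (f_boundary : ∀ n, f 0 (n + 1) = -f n 0) (g_boundary : ∀ n, g 0 (n + 1) = -g n 0)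
    (h_zero : f 0 0 = g 0 0) : f = g := by
  have h_diagonal (n : ℕ) : ∀ a b, a + b = n → f a b = g a b := by
    induction n with
    | zero =>
      intro a b hab
      obtain ⟨rfl, rfl⟩ := Nat.add_eq_zero_iff.1 hab
      exact h_zero
    | succ n ih =>
      intro a
      induction a with
      | zero =>
        rintro b hb
        obtain rfl : b = n + 1 := by omega
        rw [f_boundary, g_boundary, ih n 0 rfl]
      | succ a iha =>
        intro b hab
        rw [hf, hg, iha (b + 1) (by omega), ih b a (by omega)]
  exact funext₂ fun a b => h_diagonal _ a b rfl

/-- The `n`-th derivative of the sine at `0`. -/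
def sinCoeff : ℕ → ℤ
  | 0 => 0
  | 1 => 1
  | n + 2 => -sinCoeff n

lemma sinCoeff_two_mul (m : ℕ) : sinCoeff (2 * m) = 0 := by
  induction m with
  | zero => rfl
  | succ m ih => rw [Nat.mul_succ, sinCoeff, ih, neg_zero]

lemma sinCoeff_two_mul_add_one (m : ℕ) : sinCoeff (2 * m + 1) = (-1) ^ m := by
  induction m with
  | zero => rfl
  | succ m ih => rw [show 2 * (m + 1) + 1 = 2 * m + 1 + 2 by ring, sinCoeff, ih, pow_succ']; ring

/-- The coefficients of `cos x - sin y` as an exponential generating function; the `n`-th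
derivative of the cosine at `0` is `sinCoeff (n + 1)`. -/
def cosSubSin (a b : ℕ) : ℤ :=
  (if b = 0 then sinCoeff (a + 1) else 0) - (if a = 0 then sinCoeff b else 0)

lemma isEntringerArray_cosSubSin : IsEntringerArray cosSubSin := by
  intro a b
  simp only [cosSubSin, sinCoeff, Nat.add_eq_zero_iff, one_ne_zero, and_false, if_false]
  split_ifs <;> ring

lemma cosSubSin_zero_succ (n : ℕ) : cosSubSin 0 (n + 1) = -sinCoeff (n + 1) := by
  simp [cosSubSin]

lemma cosSubSin_boundary (n : ℕ) : cosSubSin 0 (n + 1) = -cosSubSin n 0 := by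
  simp [cosSubSin, sinCoeff]

end EntringerArray

section DownCycleArray

/-- `altCycleCount false`, indexed by the numbers `a` of elements below and `b` of elements above
the element from which the cycle is read. -/
noncomputable def downCycleArray (a b : ℕ) : ℤ :=
  altCycleCount false (⟨a, by omega⟩ : Fin (a + b + 1))

lemma downCycleArray_eq {n : ℕ} (a b : ℕ) (i : Fin n) (ha : i = a) (hb : a + b + 1 = n) :
    downCycleArray a b = altCycleCount false i := by
  subst hb
  rw [downCycleArray, Fin.ext (a := i) (b := ⟨a, by omega⟩) ha]

lemma isEntringerArray_downCycleArray : IsEntringerArray downCycleArray := by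
  intro a b
  let i : Fin (a + b + 1) := ⟨a, by omega⟩
  rw [downCycleArray_eq (a + 1) b i.succ rfl (by omega),
    downCycleArray_eq a (b + 1) i.castSucc rfl (by omega),
    downCycleArray_eq b a i.rev (by simp only [i, Fin.val_rev]; omega) (by omega)]
  exact mod_cast altCycleCount_false_succ_eq_castSucc_add i

lemma downCycleArray_zero_left (n : ℕ) : downCycleArray 0 n = noUDCyclesCount n := by
  rw [downCycleArray_eq 0 n (0 : Fin (n + 1)) rfl (by omega), altCycleCount_false_zero]

lemma downCycleArray_zero_right (n : ℕ) :
    downCycleArray n 0 = altCycleCount true (0 : Fin (n + 1)) := by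
  rw [downCycleArray_eq n 0 (Fin.last n) rfl rfl, altCycleCount_true_eq_rev, Fin.rev_zero]

lemma noUDCyclesCount_add_downCycleArray (n : ℕ) :
    noUDCyclesCount (n + 1) + downCycleArray n 0 =
      (n + 1) * noUDCyclesCount n + n * downCycleArray (n - 1) 0 := by
  have h : noUDCyclesCount (n + 1) + altCycleCount true (0 : Fin (n + 1)) =
      noUDCyclesCount n + ∑ c : Fin n, noUDOffCount c := by
    rw [noUDCyclesCount_succ_add_altCycleCount, noUDOffCount_succ]
  rw [downCycleArray_zero_right]
  cases n with
  | zero => simpa using mod_cast h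
  | succ n =>
    simp only [noUDOffCount_eq _ (0 : Fin (n + 1)), ← noUDCyclesCount_succ_add_altCycleCount,
      Finset.sum_const, Finset.card_univ, Fintype.card_fin, smul_eq_mul] at h
    rw [Nat.add_sub_cancel, downCycleArray_zero_right]
    zify at h
    push_cast
    linear_combination h

theorem mulOneSubXSubY_downCycleArray : mulOneSubXSubY downCycleArray = cosSubSin := by
  refine isEntringerArray_downCycleArray.mulOneSubXSubY.eq_of_boundary isEntringerArray_cosSubSin
    (fun n => ?_) cosSubSin_boundary ?_
  · have h := noUDCyclesCount_add_downCycleArray n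
    simp only [mulOneSubXSubY, downCycleArray_zero_left, Nat.add_sub_cancel]
    push_cast
    linear_combination h
  · simp [mulOneSubXSubY, downCycleArray_zero_left, noUDCyclesCount_zero, cosSubSin, sinCoeff]

end DownCycleArray

theorem noUDCyclesCount_succ (n : ℕ) :
    (noUDCyclesCount (n + 1) : ℤ) = (n + 1) * noUDCyclesCount n - sinCoeff (n + 1) := by
  have h := congrFun₂ mulOneSubXSubY_downCycleArray 0 (n + 1)
  rw [cosSubSin_zero_succ] at h
  simp only [mulOneSubXSubY, downCycleArray_zero_left, Nat.add_sub_cancel] at h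
  push_cast at h
  linear_combination h

theorem noUDCyclesCount_succ_div_factorial (n : ℕ) :
    (noUDCyclesCount (n + 1) : ℚ) / (n + 1).factorial =
      noUDCyclesCount n / n.factorial - sinCoeff (n + 1) / (n + 1).factorial := by
  have h : (noUDCyclesCount (n + 1) : ℚ) = (n + 1) * noUDCyclesCount n - sinCoeff (n + 1) :=
    mod_cast noUDCyclesCount_succ n
  rw [h, Nat.factorial_succ]
  push_cast
  field_simp

theorem noUDCyclesCount_two_mul_add_two_div_factorial (m : ℕ) :
    (noUDCyclesCount (2 * m + 2) : ℚ) / (2 * m + 2).factorial =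
      noUDCyclesCount (2 * m + 1) / (2 * m + 1).factorial := by
  simp [noUDCyclesCount_succ_div_factorial (2 * m + 1), sinCoeff, sinCoeff_two_mul]

theorem noUDCyclesCount_two_mul_add_one_div_factorial (m : ℕ) :
    (noUDCyclesCount (2 * m + 1) : ℚ) / (2 * m + 1).factorial =
      ∑ i ∈ Finset.Icc 2 (m + 1), (-1 : ℚ) ^ i / (2 * i - 1).factorial := by
  induction m with
  | zero =>
    rw [noUDCyclesCount_succ_div_factorial]
    simp [noUDCyclesCount_zero, sinCoeff]
  | succ m ih =>
    rw [noUDCyclesCount_succ_div_factorial, sinCoeff_two_mul_add_one, Nat.mul_succ,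
      noUDCyclesCount_two_mul_add_two_div_factorial, ih,
      Finset.sum_Icc_succ_top (show 2 ≤ m + 1 + 1 by omega),
      show 2 * (m + 1 + 1) - 1 = 2 * m + 2 + 1 by omega]
    push_cast
    ring

/-- for `r n` the number of permutations of `[n]` with no up-down
cycles, `r (2m-1) / (2m-1)! = r (2m) / (2m)! = ∑_{i=2}^{m} (-1)^i / (2i-1)!`. -/
theorem stmt19 (m : ℕ) (hm : 1 ≤ m) :
    (noUDCyclesCount (2 * m - 1) : ℚ) / (Nat.factorial (2 * m - 1) : ℚ) =
        (noUDCyclesCount (2 * m) : ℚ) / (Nat.factorial (2 * m) : ℚ) ∧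
      (noUDCyclesCount (2 * m) : ℚ) / (Nat.factorial (2 * m) : ℚ) =
        ∑ i ∈ Finset.Icc 2 m, (-1 : ℚ) ^ i / (Nat.factorial (2 * i - 1) : ℚ) := by
  obtain ⟨k, rfl⟩ := Nat.exists_eq_add_of_le' hm
  rw [show 2 * (k + 1) - 1 = 2 * k + 1 by omega, Nat.mul_succ,
    noUDCyclesCount_two_mul_add_two_div_factorial]
  exact ⟨rfl, noUDCyclesCount_two_mul_add_one_div_factorial k⟩
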